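/- The class (a,b) ∈ π₁(T²) ≅ ℤ² can be represented by an embedding (injective continuous map) S¹ → T² if and only if gcd(a,b) = 1 or (a,b) = (0,0). -/

import Mathlib

/-- The standard loop on the torus representing the class `(a, b) ∈ π₁(T²) ≅ ℤ²`
(with the two factor circles as generators). -/
noncomputable def torusLoop (a b : ℤ) : C(Circle, Circle × Circle) :=
  ⟨fun z => (z ^ a, z ^ b), by fun_prop⟩

/-!
A loop homotopic to `torusLoop (d * p) (d * q)` lifts to a plane curve `γ` with
`γ (t + 2π) = γ t + d * w`, where `w = 2π (p + q * I)`. If `1 < d` and `w ≠ 0`, such a curve has a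
chord equal to `w`, by Hopf's universal chord argument: were `γ t - γ s - w` never zero, it would
have a continuous logarithm on the plane of all `(s, t)`. Rotate and scale so that `d * w = 1`.
As `t` runs from `s` to `s + 2π`, the difference runs from a negative to a positive number, staying
in the closed lower half plane if `γ s` is a highest point of the curve and in the closed upper half
plane if it is a lowest one. The argument thus turns by `π` in one case and by `-π` in the other,
although by continuity this turn does not depend on `s`. The endpoints of the chord have the same
image on the torus, and only their parameters can show that this is a double point: equal parameters
modulo `2π` would make `w` an integral multiple of `d * w`.
-/

open Complex
open scoped Real

section Logarithm

variable {X : Type*} [TopologicalSpace X] [PreconnectedSpace X] {γ : X → ℂ}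

lemma im_sub_im_eq_arg_sub_arg_of_mem_slitPlane (hγ : Continuous γ) {c : ℂ}
    (h : ∀ x, c * exp (γ x) ∈ slitPlane) (x y : X) :
    (γ y).im - (γ x).im = arg (c * exp (γ y)) - arg (c * exp (γ x)) := by
  have exp_sub_log (z : X) : exp (γ z - log (c * exp (γ z))) = c⁻¹ := by
    rw [exp_sub, exp_log (slitPlane_ne_zero (h z)), mul_comm,
      div_mul_cancel_left₀ (exp_ne_zero _)]
  have hconst : γ y - log (c * exp (γ y)) = γ x - log (c * exp (γ x)) :=
    isCoveringMap_exp.const_of_comp (hγ.sub (Continuous.clog (by fun_prop) h))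
      (fun z w ↦ Subtype.ext ((exp_sub_log z).trans (exp_sub_log w).symm)) y x
  have := congrArg im hconst
  simp only [sub_im, log_im] at this
  linarith

lemma im_sub_im_eq_pi_of_im_exp_nonpos (hγ : Continuous γ) (h : ∀ x, (exp (γ x)).im ≤ 0)
    {x y : X} {r₁ r₂ : ℝ} (hr₁ : 0 < r₁) (hr₂ : 0 < r₂) (hx : exp (γ x) = -r₁)
    (hy : exp (γ y) = r₂) : (γ y).im - (γ x).im = π := by
  have hslit (z : X) : I * exp (γ z) ∈ slitPlane := by
    rw [mem_slitPlane_iff, I_mul_re, I_mul_im]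
    by_contra! hz
    exact exp_ne_zero (γ z) (Complex.ext hz.2 (le_antisymm (h z) (neg_nonpos.1 hz.1)))
  rw [im_sub_im_eq_arg_sub_arg_of_mem_slitPlane hγ hslit x y, hx, hy, arg_mul_real hr₂, mul_neg,
    ← neg_mul, arg_mul_real hr₁, arg_I, arg_neg_I]
  ring

lemma im_sub_im_eq_neg_pi_of_im_exp_nonneg (hγ : Continuous γ) (h : ∀ x, 0 ≤ (exp (γ x)).im)
    {x y : X} {r₁ r₂ : ℝ} (hr₁ : 0 < r₁) (hr₂ : 0 < r₂) (hx : exp (γ x) = -r₁)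
    (hy : exp (γ y) = r₂) : (γ y).im - (γ x).im = -π := by
  have := im_sub_im_eq_pi_of_im_exp_nonpos (continuous_conj.comp hγ)
    (fun z ↦ by simpa [exp_conj] using h z) (x := x) (y := y) hr₁ hr₂
    (by simp [exp_conj, hx]) (by simp [exp_conj, hy])
  simp only [Function.comp_apply, conj_im] at this
  linarith

lemma apply_eq_apply_of_forall_exp_eq (hγ : Continuous γ) {z : ℂ} (h : ∀ x, exp (γ x) = z)
    (x y : X) : γ x = γ y :=
  isCoveringMap_exp.const_of_comp hγ (fun x y ↦ Subtype.ext ((h x).trans (h y).symm)) x y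

end Logarithm

lemma exists_sub_eq_of_add_eq_add_one {γ : ℝ → ℂ} (hγ : Continuous γ) {T : ℝ}
    (hT : ∀ t, γ (t + T) = γ t + 1) {c : ℝ} (hc : c ∈ Set.Ioo 0 1) :
    ∃ s t, γ t - γ s = c := by
  by_contra! hne
  have hT₀ : T ≠ 0 := by
    rintro rfl
    simpa using hT 0
  have him : Function.Periodic (fun t ↦ (γ t).im) T := fun t ↦ by simp [hT]
  have hcompact := him.compact_of_continuous hT₀ (by fun_prop)
  obtain ⟨_, ⟨M, rfl⟩, hM⟩ := hcompact.exists_isGreatest (Set.range_nonempty _)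
  obtain ⟨_, ⟨m, rfl⟩, hm⟩ := hcompact.exists_isLeast (Set.range_nonempty _)
  obtain ⟨L, hLcont, hL⟩ : ∃ L : ℝ × ℝ → ℂ, Continuous L ∧
      ∀ s t, exp (L (s, t)) = γ t - γ s - c := by
    obtain ⟨⟨L, hLcont⟩, ⟨-, hL⟩, -⟩ := isCoveringMapOn_exp.existsUnique_continuousMap_lifts
      ⟨fun p : ℝ × ℝ ↦ γ p.2 - γ p.1 - c, by fun_prop⟩
      (a₀ := (0, 0)) (exp_log (sub_ne_zero.2 (hne 0 0))) fun p ↦ sub_ne_zero.2 (hne p.1 p.2)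
    exact ⟨L, hLcont, fun s t ↦ congrFun hL (s, t)⟩
  have hstart (s : ℝ) : exp (L (s, s)) = -c := by simp [hL]
  have hend (s : ℝ) : exp (L (s, s + T)) = (1 - c : ℝ) := by simp [hL, hT]
  have hup : (L (M, M + T)).im - (L (M, M)).im = π :=
    im_sub_im_eq_pi_of_im_exp_nonpos (γ := fun t ↦ L (M, t)) (by fun_prop)
      (fun t ↦ by simpa [hL] using hM ⟨t, rfl⟩) hc.1 (sub_pos.2 hc.2) (hstart M) (hend M)
  have hdown : (L (m, m + T)).im - (L (m, m)).im = -π :=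
    im_sub_im_eq_neg_pi_of_im_exp_nonneg (γ := fun t ↦ L (m, t)) (by fun_prop)
      (fun t ↦ by simpa [hL] using hm ⟨t, rfl⟩) hc.1 (sub_pos.2 hc.2) (hstart m) (hend m)
  have hLstart : L (M, M) = L (m, m) :=
    apply_eq_apply_of_forall_exp_eq (γ := fun s ↦ L (s, s)) (by fun_prop) hstart M m
  have hLend : L (M, M + T) = L (m, m + T) :=
    apply_eq_apply_of_forall_exp_eq (γ := fun s ↦ L (s, s + T)) (by fun_prop) hend M m
  rw [hLstart, hLend] at hup
  linarith [Real.pi_pos]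

theorem exists_sub_eq_mul_of_add_eq_add {γ : ℝ → ℂ} (hγ : Continuous γ) {T : ℝ} {w : ℂ}
    (hT : ∀ t, γ (t + T) = γ t + w) {c : ℝ} (hc : c ∈ Set.Ioo 0 1) :
    ∃ s t, γ t - γ s = c * w := by
  rcases eq_or_ne w 0 with rfl | hw
  · exact ⟨0, 0, by simp⟩
  obtain ⟨s, t, hst⟩ := exists_sub_eq_of_add_eq_add_one (γ := fun t ↦ γ t / w) (by fun_prop)
    (fun t ↦ by rw [hT, add_div, div_self hw]) hc
  exact ⟨s, t, by rw [← hst, ← sub_div, div_mul_cancel₀ _ hw]⟩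

/-- The universal covering of the torus `T² = S¹ × S¹`. The plane is `ℂ` rather than `ℝ × ℝ`, so
that lifts of loops are curves to which complex logarithms apply. -/
noncomputable def torusExp : C(ℂ, Circle × Circle) :=
  ⟨fun z ↦ (Circle.exp z.re, Circle.exp z.im), by fun_prop⟩

lemma torusExp_add (z w : ℂ) : torusExp (z + w) = torusExp z * torusExp w := by
  simp [torusExp]

lemma torusExp_ofReal_mul (a b : ℤ) (t : ℝ) :
    torusExp (t * (a + b * I)) = torusLoop a b (Circle.exp t) := by
  simp [torusExp, torusLoop, mul_comm t]

lemma torusExp_injOn : Set.InjOn torusExp (Set.Ico (-π) π ×ℂ Set.Ico (-π) π) := by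
  have hexp : Set.InjOn Circle.exp (Set.Ico (-π) π) := Circle.exp_injOn_Ico (by linarith)
  intro z hz w hw hzw
  exact Complex.ext (hexp hz.1 hw.1 (congrArg Prod.fst hzw))
    (hexp hz.2 hw.2 (congrArg Prod.snd hzw))

section Lift

variable {X : Type*} [TopologicalSpace X]

lemma exists_eq_mul_circleExp_of_homotopic {f g : C(X, Circle)} (h : f.Homotopic g) :
    ∃ φ : C(X, ℝ), ∀ x, f x = g x * Circle.exp (φ x) := by
  obtain ⟨H⟩ := h.symm
  let K : C(unitInterval × X, Circle) := ⟨fun p ↦ (g p.2)⁻¹ * H p, by fun_prop⟩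
  have hK (x : X) : K (0, x) = Circle.exp (ContinuousMap.const X (0 : ℝ) x) := by simp [K]
  let Φ := Circle.isCoveringMap_exp.liftHomotopy K _ hK
  refine ⟨⟨fun x ↦ Φ (1, x), by fun_prop⟩, fun x ↦ ?_⟩
  have hΦ : Circle.exp (Φ (1, x)) = K (1, x) :=
    congrFun (Circle.isCoveringMap_exp.liftHomotopy_lifts K _ hK) (1, x)
  simp [hΦ, K]

lemma exists_eq_mul_torusExp_of_homotopic {f g : C(X, Circle × Circle)} (h : f.Homotopic g) :
    ∃ φ : C(X, ℂ), ∀ x, f x = g x * torusExp (φ x) := by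
  obtain ⟨φ, hφ⟩ := exists_eq_mul_circleExp_of_homotopic
    ((ContinuousMap.Homotopic.refl ContinuousMap.fst).comp h)
  obtain ⟨ψ, hψ⟩ := exists_eq_mul_circleExp_of_homotopic
    ((ContinuousMap.Homotopic.refl ContinuousMap.snd).comp h)
  exact ⟨⟨fun x ↦ φ x + ψ x * I, by fun_prop⟩,
    fun x ↦ Prod.ext (by simpa [torusExp] using hφ x) (by simpa [torusExp] using hψ x)⟩

end Lift

lemma exists_lift_of_homotopic_torusLoop {f : C(Circle, Circle × Circle)} {a b : ℤ}
    (h : f.Homotopic (torusLoop a b)) :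
    ∃ γ : ℝ → ℂ, Continuous γ ∧ (∀ t, torusExp (γ t) = f (Circle.exp t)) ∧
      Function.Periodic (fun t ↦ γ t - t * (a + b * I)) (2 * π) := by
  obtain ⟨φ, hφ⟩ := exists_eq_mul_torusExp_of_homotopic h
  refine ⟨fun t ↦ t * (a + b * I) + φ (Circle.exp t), by fun_prop, fun t ↦ ?_, fun t ↦ ?_⟩
  · rw [torusExp_add, torusExp_ofReal_mul, hφ]
  · simp only [add_sub_cancel_left, Circle.exp_add_two_pi]

theorem le_one_of_injective_of_homotopic_torusLoop {f : C(Circle, Circle × Circle)}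
    (hf : Function.Injective f) {p q : ℤ} (hpq : (p + q * I : ℂ) ≠ 0) {d : ℕ}
    (h : f.Homotopic (torusLoop (p * d) (q * d))) : d ≤ 1 := by
  by_contra! hd
  have hdR : (1 : ℝ) < d := by exact_mod_cast hd
  have hdC : (d : ℂ) ≠ 0 := by exact_mod_cast (zero_lt_one.trans hdR).ne'
  obtain ⟨γ, hγ, hγf, hper⟩ := exists_lift_of_homotopic_torusLoop h
  have hturn (n : ℤ) (t : ℝ) :
      γ (t + n * (2 * π)) = γ t + n * d * ((2 * π : ℝ) * (p + q * I)) := by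
    have := hper.int_mul n t
    push_cast at this ⊢
    linear_combination this
  obtain ⟨s, t, hchord⟩ := exists_sub_eq_mul_of_add_eq_add hγ
    (fun t ↦ by simpa only [Int.cast_one, one_mul] using hturn 1 t) (c := (d : ℝ)⁻¹)
    ⟨inv_pos.2 (zero_lt_one.trans hdR), inv_lt_one_of_one_lt₀ hdR⟩
  have hγt : γ t = γ s + (2 * π : ℝ) * (p + q * I) := by
    rw [← sub_eq_iff_eq_add', hchord, ofReal_inv, ofReal_natCast, inv_mul_cancel_left₀ hdC]
  have hexp : Circle.exp t = Circle.exp s := hf <| by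
    rw [← hγf, ← hγf, hγt, torusExp_add, torusExp_ofReal_mul, Circle.exp_two_pi]
    simp [torusLoop]
  obtain ⟨n, rfl⟩ := Circle.exp_eq_exp.1 hexp
  have hw : ((2 * π : ℝ) * (p + q * I) : ℂ) ≠ 0 :=
    mul_ne_zero (ofReal_ne_zero.2 Real.two_pi_pos.ne') hpq
  have hnd : (n * d : ℂ) = 1 :=
    mul_right_cancel₀ hw (by rw [one_mul, ← add_right_inj, ← hturn, hγt])
  have hunit : IsUnit (d : ℤ) := .of_mul_eq_one_right n (by exact_mod_cast hnd)
  exact hd.ne' (Nat.isUnit_iff.1 (Int.ofNat_isUnit.1 hunit))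

theorem gcd_le_one_of_injective_of_homotopic_torusLoop {f : C(Circle, Circle × Circle)}
    (hf : Function.Injective f) {a b : ℤ} (h : f.Homotopic (torusLoop a b)) :
    Int.gcd a b ≤ 1 := by
  rcases (Int.gcd a b).eq_zero_or_pos with h₀ | h₀
  · exact h₀.trans_le zero_le_one
  obtain ⟨p, q, hpq, ha, hb⟩ := Int.exists_gcd_one h₀
  refine le_one_of_injective_of_homotopic_torusLoop hf (p := p) (q := q) (fun h₁ ↦ ?_)
    (by rwa [← ha, ← hb])
  have hp : p = 0 := by simpa using congrArg re h₁
  have hq : q = 0 := by simpa using congrArg im h₁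
  simp [hp, hq] at hpq

lemma torusLoop_injective {a b : ℤ} (h : Int.gcd a b = 1) :
    Function.Injective (torusLoop a b) := by
  have zpow_bezout (z : Circle) : (z ^ a) ^ Int.gcdA a b * (z ^ b) ^ Int.gcdB a b = z := by
    rw [← zpow_mul, ← zpow_mul, ← zpow_add, ← Int.gcd_eq_gcd_ab, h, Nat.cast_one, zpow_one]
  intro z w hzw
  obtain ⟨ha, hb⟩ := Prod.ext_iff.1 hzw
  change z ^ a = w ^ a at ha
  change z ^ b = w ^ b at hb
  rw [← zpow_bezout z, ha, hb, zpow_bezout w]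

lemma exists_injective_homotopic_torusLoop_zero :
    ∃ f : C(Circle, Circle × Circle), Function.Injective f ∧ f.Homotopic (torusLoop 0 0) := by
  let ι : C(Circle, ℂ) := ⟨(↑), by fun_prop⟩
  have mem_Ico {r : ℝ} (hr : |r| ≤ 1) : r ∈ Set.Ico (-π) π := by
    constructor <;> linarith [abs_le.1 hr, Real.pi_gt_three]
  have hι (z : Circle) : ι z ∈ Set.Ico (-π) π ×ℂ Set.Ico (-π) π :=
    ⟨mem_Ico ((abs_re_le_norm _).trans z.norm_coe.le),
      mem_Ico ((abs_im_le_norm _).trans z.norm_coe.le)⟩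
  have hconst : torusLoop 0 0 = torusExp.comp (.const Circle 0) := by
    ext <;> simp [torusLoop, torusExp]
  refine ⟨torusExp.comp ι, fun z w hzw ↦ Circle.ext (torusExp_injOn (hι z) (hι w) hzw), ?_⟩
  rw [hconst]
  exact .comp (.refl torusExp) ⟨.affine ι (.const Circle 0)⟩

/-- The class `(a,b) ∈ π₁(T²) ≅ ℤ²` is represented by an embedding
(an injective continuous loop, i.e. an injective continuous map freely homotopic to the
standard `(a,b)`-loop) if and only if `gcd(a,b) = 1` or `(a,b) = (0,0)`. -/
theorem stmt4 (a b : ℤ) :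
    (∃ f : C(Circle, Circle × Circle), Function.Injective f ∧
      ContinuousMap.Homotopic f (torusLoop a b)) ↔
      (Int.gcd a b = 1 ∨ (a = 0 ∧ b = 0)) := by
  constructor
  · rintro ⟨f, hf, h⟩
    rw [← Int.gcd_eq_zero_iff]
    have := gcd_le_one_of_injective_of_homotopic_torusLoop hf h
    omega
  · rintro (h | ⟨rfl, rfl⟩)
    · exact ⟨torusLoop a b, torusLoop_injective h, .refl _⟩
    · exact exists_injective_homotopic_torusLoop_zero
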